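/- For all complex numbers x, y with |x| < 1 and |y| < 1, the double series Σ_{a,b ≥ 0} τ_{1,2}(p^{a+b})·x^a·y^b (whose coefficients do not depend on the prime p, since τ_{1,2}(p^k) = ⌊k/2⌋ + 1) converges absolutely and equals (1 + x·y − x²·y − x·y²) / ( (1 − x)·(1 − x²)·(1 − y)·(1 − y²) ). -/

import Mathlib

/-- `τ_{1,2}(n)` is the number of ordered pairs `(a,b)` of positive integers with `a·b² = n`. -/
noncomputable def tau12 (n : ℕ) : ℕ :=
  Nat.card {q : ℕ × ℕ // 0 < q.1 ∧ 0 < q.2 ∧ q.1 * q.2 ^ 2 = n}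

/-!
Since `b² ∣ p^k` exactly when `b ∣ p^⌊k/2⌋`, the coefficients are `⌊(a+b)/2⌋ + 1`. Adding the
quotients and remainders of `a` and `b` modulo `2` turns this into
`1 + ⌊a/2⌋ + ⌊b/2⌋ + (a % 2)(b % 2)`, so the double series is a sum of four products of one-variable
series, each summed by separating even and odd exponents. Nothing is divided by `2`, so the argument
works over any normed field.
-/

theorem pow_dvd_prime_pow_iff {M : Type*} [CommMonoidWithZero M] [IsCancelMulZero M] {p b : M}
    (hp : Prime p) {m : ℕ} (hm : m ≠ 0) (k : ℕ) : b ^ m ∣ p ^ k ↔ b ∣ p ^ (k / m) := by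
  constructor
  · intro h
    obtain ⟨j, -, hb⟩ := (dvd_prime_pow hp k).1 ((dvd_pow_self b hm).trans h)
    have hjm : j * m ≤ k := by
      rwa [hb.pow_pow.dvd_iff_dvd_left, ← pow_mul, pow_dvd_pow_iff hp.ne_zero hp.not_isUnit] at h
    exact hb.dvd.trans (pow_dvd_pow p ((Nat.le_div_iff_mul_le hm.pos).2 hjm))
  · intro h
    calc b ^ m ∣ (p ^ (k / m)) ^ m := pow_dvd_pow_of_dvd h m
      _ = p ^ (k / m * m) := (pow_mul p _ m).symm
      _ ∣ p ^ k := pow_dvd_pow p (Nat.div_mul_le_self k m)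

theorem tau12_eq_card_sq_dvd {n : ℕ} (hn : n ≠ 0) : tau12 n = Nat.card {b : ℕ // b ^ 2 ∣ n} :=
  Nat.card_congr
    { toFun := fun q => ⟨q.1.2, Dvd.intro_left _ q.2.2.2⟩
      invFun := fun b =>
        ⟨(n / b.1 ^ 2, b.1), Nat.div_pos (Nat.le_of_dvd hn.pos b.2)
            (Nat.pos_of_dvd_of_pos b.2 hn.pos),
          Nat.pos_of_dvd_of_pos (dvd_of_mul_left_dvd (pow_two b.1 ▸ b.2)) hn.pos,
          Nat.div_mul_cancel b.2⟩
      left_inv := fun ⟨_, _, hb, hab⟩ =>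
        Subtype.ext (Prod.ext (Nat.div_eq_of_eq_mul_left (pow_pos hb 2) hab.symm) rfl)
      right_inv := fun _ => rfl }

theorem tau12_prime_pow {p : ℕ} (hp : p.Prime) (k : ℕ) : tau12 (p ^ k) = k / 2 + 1 := by
  have sq_dvd_iff (b : ℕ) : b ^ 2 ∣ p ^ k ↔ b ∈ (p ^ (k / 2)).divisors := by
    rw [pow_dvd_prime_pow_iff hp.prime two_ne_zero, Nat.mem_divisors,
      and_iff_left (pow_ne_zero _ hp.ne_zero)]
  rw [tau12_eq_card_sq_dvd (pow_ne_zero k hp.ne_zero),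
    Nat.card_congr (Equiv.subtypeEquivRight sq_dvd_iff), Nat.card_eq_fintype_card,
    Fintype.card_coe, Nat.divisors_prime_pow hp, Finset.card_map, Finset.card_range]

/-- Unlike with `HasSum.mul` and `summable_mul_of_summable_norm`, the ring need not be complete. -/
theorem hasSum_mul_of_summable_norm {ι κ R : Type*} [NormedRing R] {f : ι → R} {g : κ → R}
    {s t : R} (hf : HasSum f s) (hg : HasSum g t) (hf' : Summable (‖f ·‖))
    (hg' : Summable (‖g ·‖)) : HasSum (fun q : ι × κ => f q.1 * g q.2) (s * t) := by
  have hnorm : Summable fun q : Σ _ : ι, κ => ‖f q.1 * g q.2‖ :=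
    (hf'.mul_norm hg').comp_injective (i := Equiv.sigmaEquivProd ι κ) (Equiv.injective _)
  have hsigma : HasSum (fun q : Σ _ : ι, κ => f q.1 * g q.2) (s * t) :=
    HasSum.of_sigma (fun i => hg.mul_left (f i)) (hf.mul_right t)
      (cauchySeq_finset_of_summable_norm hnorm)
  exact (Equiv.sigmaEquivProd ι κ).hasSum_iff.1 hsigma

theorem add_div_two_eq (a b : ℕ) : (a + b) / 2 = a / 2 + b / 2 + a % 2 * (b % 2) := by
  rcases Nat.mod_two_eq_zero_or_one a with ha | ha <;> rw [ha] <;> omega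

theorem add_div_two_add_one_mul_pow {R : Type*} [CommSemiring R] (x y : R) (a b : ℕ) :
    (((a + b) / 2 + 1 : ℕ) : R) * x ^ a * y ^ b =
      x ^ a * y ^ b + ((a / 2 : ℕ) * x ^ a) * y ^ b + x ^ a * ((b / 2 : ℕ) * y ^ b) +
        ((a % 2 : ℕ) * x ^ a) * ((b % 2 : ℕ) * y ^ b) := by
  rw [add_div_two_eq]
  push_cast
  ring

theorem norm_pow_lt_one {R : Type*} [SeminormedRing R] {x : R} (hx : ‖x‖ < 1) {n : ℕ}
    (hn : n ≠ 0) : ‖x ^ n‖ < 1 :=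
  (norm_pow_le' x hn.pos).trans_lt (pow_lt_one₀ (norm_nonneg x) hx hn)

section NormedRing

variable {R : Type*} [NormedRing R] {x : R}

theorem summable_norm_div_mul_pow (m : ℕ) (hx : ‖x‖ < 1) :
    Summable fun n : ℕ => ‖((n / m : ℕ) : R) * x ^ n‖ := by
  refine summable_norm_mul_geometric_of_norm_lt_one (k := 1) hx
    (.of_bound' (.of_forall fun n => ?_))
  simpa using mod_cast Nat.div_le_self n m

theorem summable_norm_mod_mul_pow (m : ℕ) (hx : ‖x‖ < 1) :
    Summable fun n : ℕ => ‖((n % m : ℕ) : R) * x ^ n‖ := by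
  refine summable_norm_mul_geometric_of_norm_lt_one (k := 1) hx
    (.of_bound' (.of_forall fun n => ?_))
  simpa using mod_cast Nat.mod_le n m

end NormedRing

theorem summable_norm_add_div_two_add_one_mul_pow {R : Type*} [NormedCommRing R] {x y : R}
    (hx : ‖x‖ < 1) (hy : ‖y‖ < 1) :
    Summable fun q : ℕ × ℕ => ‖(((q.1 + q.2) / 2 + 1 : ℕ) : R) * x ^ q.1 * y ^ q.2‖ := by
  have hx0 := summable_norm_geometric_of_norm_lt_one hx
  have hy0 := summable_norm_geometric_of_norm_lt_one hy
  have hbound := (((hx0.mul_norm hy0).add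
    ((summable_norm_div_mul_pow 2 hx).mul_norm hy0)).add
    (hx0.mul_norm (summable_norm_div_mul_pow 2 hy))).add
    ((summable_norm_mod_mul_pow 2 hx).mul_norm (summable_norm_mod_mul_pow 2 hy))
  refine hbound.of_nonneg_of_le (fun _ => norm_nonneg _) fun q => ?_
  rw [add_div_two_add_one_mul_pow]
  exact norm_add₄_le

theorem hasSum_mod_two_mul_pow {K : Type*} [NormedDivisionRing K] {x : K} (hx : ‖x‖ < 1) :
    HasSum (fun n : ℕ => ((n % 2 : ℕ) : K) * x ^ n) (x / (1 - x ^ 2)) := by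
  have heven : HasSum (fun k : ℕ => ((2 * k % 2 : ℕ) : K) * x ^ (2 * k)) 0 := by
    simp
  have hodd : HasSum (fun k : ℕ => (((2 * k + 1) % 2 : ℕ) : K) * x ^ (2 * k + 1))
      (x / (1 - x ^ 2)) := by
    simpa [Nat.add_mod, pow_succ', pow_mul, div_eq_mul_inv] using
      (hasSum_geometric_of_norm_lt_one (norm_pow_lt_one hx two_ne_zero)).mul_left x
  rw [← zero_add (x / _)]
  exact HasSum.even_add_odd heven hodd

section NormedField

variable {𝕜 : Type*} [NormedField 𝕜] {x y : 𝕜}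

theorem hasSum_div_two_mul_pow (hx : ‖x‖ < 1) :
    HasSum (fun n : ℕ => ((n / 2 : ℕ) : 𝕜) * x ^ n) (x ^ 2 / ((1 - x) * (1 - x ^ 2))) := by
  have hx1 := (isUnit_one_sub_of_norm_lt_one hx).ne_zero
  have hx2 := (isUnit_one_sub_of_norm_lt_one (norm_pow_lt_one hx two_ne_zero)).ne_zero
  have hgeom := hasSum_coe_mul_geometric_of_norm_lt_one (norm_pow_lt_one hx two_ne_zero)
  have heven : HasSum (fun k : ℕ => ((2 * k / 2 : ℕ) : 𝕜) * x ^ (2 * k))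
      (x ^ 2 / (1 - x ^ 2) ^ 2) := by
    simpa only [Nat.mul_div_cancel_left _ two_pos, pow_mul] using hgeom
  have hodd : HasSum (fun k : ℕ => (((2 * k + 1) / 2 : ℕ) : 𝕜) * x ^ (2 * k + 1))
      (x ^ 2 / (1 - x ^ 2) ^ 2 * x) := by
    have hdiv (k : ℕ) : (2 * k + 1) / 2 = k := by omega
    simpa only [hdiv, pow_succ _ (2 * _), pow_mul, mul_assoc] using hgeom.mul_right x
  have hvalue : x ^ 2 / ((1 - x) * (1 - x ^ 2)) =
      x ^ 2 / (1 - x ^ 2) ^ 2 + x ^ 2 / (1 - x ^ 2) ^ 2 * x := by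
    field_simp
    ring
  rw [hvalue]
  exact HasSum.even_add_odd heven hodd

theorem hasSum_add_div_two_add_one_mul_pow (hx : ‖x‖ < 1) (hy : ‖y‖ < 1) :
    HasSum (fun q : ℕ × ℕ => (((q.1 + q.2) / 2 + 1 : ℕ) : 𝕜) * x ^ q.1 * y ^ q.2)
      ((1 + x * y - x ^ 2 * y - x * y ^ 2) /
        ((1 - x) * (1 - x ^ 2) * (1 - y) * (1 - y ^ 2))) := by
  have hx1 := (isUnit_one_sub_of_norm_lt_one hx).ne_zero
  have hx2 := (isUnit_one_sub_of_norm_lt_one (norm_pow_lt_one hx two_ne_zero)).ne_zero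
  have hy1 := (isUnit_one_sub_of_norm_lt_one hy).ne_zero
  have hy2 := (isUnit_one_sub_of_norm_lt_one (norm_pow_lt_one hy two_ne_zero)).ne_zero
  have hgeomx := hasSum_geometric_of_norm_lt_one hx
  have hgeomy := hasSum_geometric_of_norm_lt_one hy
  have hgeomx' := summable_norm_geometric_of_norm_lt_one hx
  have hgeomy' := summable_norm_geometric_of_norm_lt_one hy
  have hdivx := hasSum_div_two_mul_pow hx
  have hdivy := hasSum_div_two_mul_pow hy
  have hdivx' := summable_norm_div_mul_pow 2 hx
  have hdivy' := summable_norm_div_mul_pow 2 hy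
  have hsum := (((hasSum_mul_of_summable_norm hgeomx hgeomy hgeomx' hgeomy').add
    (hasSum_mul_of_summable_norm hdivx hgeomy hdivx' hgeomy')).add
    (hasSum_mul_of_summable_norm hgeomx hdivy hgeomx' hdivy')).add
    (hasSum_mul_of_summable_norm (hasSum_mod_two_mul_pow hx) (hasSum_mod_two_mul_pow hy)
      (summable_norm_mod_mul_pow 2 hx) (summable_norm_mod_mul_pow 2 hy))
  have hvalue : (1 + x * y - x ^ 2 * y - x * y ^ 2) /
        ((1 - x) * (1 - x ^ 2) * (1 - y) * (1 - y ^ 2)) =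
      (1 - x)⁻¹ * (1 - y)⁻¹ + x ^ 2 / ((1 - x) * (1 - x ^ 2)) * (1 - y)⁻¹ +
        (1 - x)⁻¹ * (y ^ 2 / ((1 - y) * (1 - y ^ 2))) + x / (1 - x ^ 2) * (y / (1 - y ^ 2)) := by
    field_simp
    ring
  rw [hvalue]
  simpa only [add_div_two_add_one_mul_pow] using hsum

theorem tsum_tau12_power_series_general {p : ℕ} (hp : p.Prime) (hx : ‖x‖ < 1) (hy : ‖y‖ < 1) :
    Summable (fun q : ℕ × ℕ => ‖(tau12 (p ^ (q.1 + q.2)) : 𝕜) * x ^ q.1 * y ^ q.2‖) ∧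
      ∑' q : ℕ × ℕ, (tau12 (p ^ (q.1 + q.2)) : 𝕜) * x ^ q.1 * y ^ q.2 =
        (1 + x * y - x ^ 2 * y - x * y ^ 2) /
          ((1 - x) * (1 - x ^ 2) * (1 - y) * (1 - y ^ 2)) := by
  simp only [tau12_prime_pow hp]
  exact ⟨summable_norm_add_div_two_add_one_mul_pow hx hy,
    (hasSum_add_div_two_add_one_mul_pow hx hy).tsum_eq⟩

end NormedField

/-- For any prime `p` and `|x| < 1`, `|y| < 1`, the series
`∑_{a,b ≥ 0} τ_{1,2}(p^{a+b}) x^a y^b` converges absolutely and equals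
`(1 + xy - x²y - xy²)/((1-x)(1-x²)(1-y)(1-y²))`. -/
theorem tsum_tau12_power_series (p : ℕ) (hp : p.Prime) (x y : ℂ)
    (hx : ‖x‖ < 1) (hy : ‖y‖ < 1) :
    Summable (fun q : ℕ × ℕ => ‖(tau12 (p ^ (q.1 + q.2)) : ℂ) * x ^ q.1 * y ^ q.2‖) ∧
      ∑' q : ℕ × ℕ, (tau12 (p ^ (q.1 + q.2)) : ℂ) * x ^ q.1 * y ^ q.2 =
        (1 + x * y - x ^ 2 * y - x * y ^ 2) /
          ((1 - x) * (1 - x ^ 2) * (1 - y) * (1 - y ^ 2)) :=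
  tsum_tau12_power_series_general hp hx hy
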